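/- Every finite-dimensional simple D-module is isomorphic to a quotient of the Verma module M_{1,c} for some c ∈ k. -/

import Mathlib

open FreeAlgebra

/-- Generators of the double of the Jordan plane. -/
inductive JGen : Type
  | u | v | zeta | g | ginv | x | y

variable (k : Type) [Field k] [IsAlgClosed k] [CharZero k]

/-- The defining relations of the double of the Jordan plane. -/
inductive JRel : FreeAlgebra k JGen → FreeAlgebra k JGen → Prop
  | gginv : JRel (ι k .g * ι k .ginv) 1
  | ginvg : JRel (ι k .ginv * ι k .g) 1
  | zg : JRel (ι k .zeta * ι k .g) (ι k .g * ι k .zeta)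
  | gx : JRel (ι k .g * ι k .x) (ι k .x * ι k .g)
  | gy : JRel (ι k .g * ι k .y) (ι k .y * ι k .g + ι k .x * ι k .g)
  | zy : JRel (ι k .zeta * ι k .y) (ι k .y * ι k .zeta + ι k .y)
  | zx : JRel (ι k .zeta * ι k .x) (ι k .x * ι k .zeta + ι k .x)
  | ug : JRel (ι k .u * ι k .g) (ι k .g * ι k .u)
  | vg : JRel (ι k .v * ι k .g) (ι k .g * ι k .v + ι k .g * ι k .u)
  | vz : JRel (ι k .v * ι k .zeta) (ι k .zeta * ι k .v + ι k .v)
  | uz : JRel (ι k .u * ι k .zeta) (ι k .zeta * ι k .u + ι k .u)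
  | yx : JRel (ι k .y * ι k .x) (ι k .x * ι k .y - (1/2 : k) • (ι k .x * ι k .x))
  | vu : JRel (ι k .v * ι k .u) (ι k .u * ι k .v - (1/2 : k) • (ι k .u * ι k .u))
  | ux : JRel (ι k .u * ι k .x) (ι k .x * ι k .u)
  | vx : JRel (ι k .v * ι k .x) (ι k .x * ι k .v + (1 - ι k .g) + ι k .x * ι k .u)
  | uy : JRel (ι k .u * ι k .y) (ι k .y * ι k .u + (1 - ι k .g))
  | vy : JRel (ι k .v * ι k .y) (ι k .y * ι k .v - ι k .g * ι k .zeta + ι k .y * ι k .u)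

/-- The double of the Jordan plane, as the presented algebra. -/
def D : Type := RingQuot (JRel k)

noncomputable instance : Ring (D k) := inferInstanceAs (Ring (RingQuot (JRel k)))
noncomputable instance : Algebra k (D k) := inferInstanceAs (Algebra k (RingQuot (JRel k)))

/-- The canonical projection from the free algebra onto `D`. -/
noncomputable def Dmk : FreeAlgebra k JGen →ₐ[k] D k := RingQuot.mkAlgHom k (JRel k)

noncomputable def DU : D k := Dmk k (ι k .u)
noncomputable def DV : D k := Dmk k (ι k .v)
noncomputable def DZ : D k := Dmk k (ι k .zeta)
noncomputable def DG : D k := Dmk k (ι k .g)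
noncomputable def DGinv : D k := Dmk k (ι k .ginv)
noncomputable def DX : D k := Dmk k (ι k .x)
noncomputable def DY : D k := Dmk k (ι k .y)

set_option synthInstance.maxHeartbeats 1000000
set_option maxHeartbeats 2000000

/-- The left ideal of `D` generated by `g - a`, `ζ + c/2`, `u`, `v`. -/
noncomputable def MIdeal (a c : k) : Submodule (D k) (D k) :=
  Submodule.span (D k)
    {DG k - algebraMap k (D k) a, DZ k + algebraMap k (D k) (c / 2), DU k, DV k}

/-- The Verma module `M_{a,c} = D ⊗_{D^{≥0}} T_{a,c}`, realized as the quotient of `D` by the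
left ideal generated by `g - a`, `ζ + c/2`, `u`, `v` (the annihilator in `D^{≥0}` of the
generator `z_{a,c}` of `T_{a,c}`, on which `g` acts by `a`, `ζ` by `-c/2`, and `u`, `v` by `0`).
The class of `1` corresponds to `1 ⊗ z_{a,c}`. -/
noncomputable abbrev Mver (a c : k) : Type := (D k) ⧸ (MIdeal k a c)

/-- The class of `d ∈ D` in `M_{a,c}`. -/
noncomputable def mmk (a c : k) : D k → Mver k a c := Submodule.Quotient.mk

theorem aux_comm_gen {K V : Type} [Field K] [AddCommGroup V] [Module K V]
    (G Y X : Module.End K V) (h : G * Y = Y * G + X) (hX : Commute G X) (n : ℕ) :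
    ∀ w : V, (G ^ n) w = 0 → (G ^ (n + 1)) (Y w) = 0 := by
  induction n with
  | zero => intro w hw; simp at hw; simp [hw]
  | succ n ih =>
    intro w hw
    have h1 : (G ^ (n + 1 + 1)) (Y w) = (G ^ (n + 1)) ((G * Y) w) := by
      rw [pow_succ]; rfl
    have h2 : (G ^ n) (G w) = 0 := by
      rw [pow_succ] at hw; exact hw
    have h3 : (G ^ (n + 1)) (X w) = X ((G ^ (n + 1)) w) := by
      have := (hX.pow_left (n + 1)).eq
      exact congrArg (fun f : Module.End K V => f w) this
    rw [h1, h, LinearMap.add_apply, map_add, h3, hw, map_zero, add_zero]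
    exact ih _ h2

theorem aux_lowest {K V : Type} [Field K] [CharZero K] [IsAlgClosed K] [AddCommGroup V]
    [Module K V] [FiniteDimensional K V] [Nontrivial V] (Z : Module.End K V) :
    ∃ l : K, Z.HasEigenvalue l ∧ ¬ Z.HasEigenvalue (l - 1) := by
  by_contra! hcon
  obtain ⟨l, hl⟩ := Module.End.exists_eigenvalue Z
  have hall : ∀ n : ℕ, Z.HasEigenvalue (l - n) := by
    intro n
    induction n with
    | zero => simpa using hl
    | succ n ih =>
      have := hcon _ ih
      push_cast
      rwa [← sub_sub]
  have hfin : Set.Finite {m : K | Z.HasEigenvalue m} := Module.End.finite_hasEigenvalue Z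
  refine Set.infinite_of_injective_forall_mem (f := fun n : ℕ => l - (n : K)) ?_ hall hfin
  intro a b hab
  simpa using hab

theorem aux_vec {K V : Type} [Field K] [CharZero K] [IsAlgClosed K] [AddCommGroup V]
    [Module K V] [FiniteDimensional K V] [Nontrivial V] (Z G U W : Module.End K V)
    (hg : Z * G = G * Z) (hu : U * Z = Z * U + U) (hv : W * Z = Z * W + W) :
    ∃ (l a : K) (w : V), w ≠ 0 ∧ Z w = l • w ∧ G w = a • w ∧ U w = 0 ∧ W w = 0 := by
  obtain ⟨l, hl, hl'⟩ := aux_lowest Z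
  have hE : ∀ w ∈ Z.eigenspace l, G w ∈ Z.eigenspace l := by
    intro w hw
    rw [Module.End.mem_eigenspace_iff] at hw ⊢
    have := congrArg (fun f : Module.End K V => f w) hg
    simp only [Module.End.mul_apply] at this
    rw [this, hw, map_smul]
  have hkill : ∀ T : Module.End K V, T * Z = Z * T + T → ∀ w ∈ Z.eigenspace l, T w = 0 := by
    intro T hT w hw
    by_contra hne
    apply hl'
    rw [Module.End.mem_eigenspace_iff] at hw
    refine Module.End.hasEigenvalue_of_hasEigenvector (x := T w) ⟨?_, hne⟩
    rw [Module.End.mem_eigenspace_iff]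
    have := congrArg (fun f : Module.End K V => f w) hT
    simp only [Module.End.mul_apply, LinearMap.add_apply] at this
    rw [hw, map_smul] at this
    rw [sub_smul, one_smul, this]; abel
  have hnt : Nontrivial (Z.eigenspace l) := Submodule.nontrivial_iff_ne_bot.2 hl
  obtain ⟨a, ha⟩ := Module.End.exists_eigenvalue (G.restrict hE)
  obtain ⟨w, hw⟩ := ha.exists_hasEigenvector
  refine ⟨l, a, w, ?_, ?_, ?_, hkill U hu w w.2, hkill W hv w w.2⟩
  · exact fun h => hw.2 (Subtype.ext h)
  · exact Module.End.mem_eigenspace_iff.1 w.2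
  · exact congrArg Subtype.val hw.apply_eq_smul

theorem aux_induct (P : D k → Prop) (hadd : ∀ a b, P a → P b → P (a + b))
    (hmul : ∀ a b, P a → P b → P (a * b)) (hs : ∀ r : k, P (algebraMap k (D k) r))
    (hu : P (DU k)) (hv : P (DV k)) (hz : P (DZ k)) (hg : P (DG k)) (hgi : P (DGinv k))
    (hx : P (DX k)) (hy : P (DY k)) (d : D k) : P d := by
  obtain ⟨f, rfl⟩ : ∃ f, Dmk k f = d := RingQuot.mkAlgHom_surjective k (JRel k) d
  induction f using FreeAlgebra.induction with
  | grade0 r => rw [AlgHom.commutes]; exact hs r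
  | grade1 x => cases x <;> assumption
  | mul a b ha hb => rw [map_mul]; exact hmul _ _ ha hb
  | add a b ha hb => rw [map_add]; exact hadd _ _ ha hb

theorem aux_rel {a b : FreeAlgebra k JGen} (h : JRel k a b) : Dmk k a = Dmk k b :=
  RingQuot.mkAlgHom_rel k h

/-- every finite-dimensional simple `D`-module is (isomorphic to) a quotient of
the Verma module `M_{1,c}` for some `c ∈ k`, i.e. admits a surjective `D`-linear map from
some `M_{1,c}`. -/
theorem simple_is_quotient_of_Verma (S : Type) (_ : AddCommGroup S) (_ : Module k S)
    (_ : Module (D k) S) (_ : IsScalarTower k (D k) S) (_ : FiniteDimensional k S)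
    (hS : IsSimpleModule (D k) S) :
    ∃ (c : k) (φ : Mver k 1 c →ₗ[D k] S), Function.Surjective φ := by
  have hnt : Nontrivial S := IsSimpleModule.nontrivial (D k) S
  let F : D k →ₐ[k] Module.End k S := Algebra.lsmul k k S
  have hF : ∀ d s, F d s = d • s := fun _ _ => rfl
  have rgi : DG k * DGinv k = 1 := by simpa [DG, DGinv] using aux_rel k .gginv
  have rig : DGinv k * DG k = 1 := by simpa [DG, DGinv] using aux_rel k .ginvg
  have rzg : DZ k * DG k = DG k * DZ k := by simpa [DG, DZ] using aux_rel k .zg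
  have rgx : DG k * DX k = DX k * DG k := by simpa [DG, DX] using aux_rel k .gx
  have rgy : DG k * DY k = DY k * DG k + DX k * DG k := by
    simpa [DG, DX, DY] using aux_rel k .gy
  have rug : DU k * DG k = DG k * DU k := by simpa [DG, DU] using aux_rel k .ug
  have rvg : DV k * DG k = DG k * DV k + DG k * DU k := by
    simpa [DG, DU, DV] using aux_rel k .vg
  have rvz : DV k * DZ k = DZ k * DV k + DV k := by simpa [DZ, DV] using aux_rel k .vz
  have ruz : DU k * DZ k = DZ k * DU k + DU k := by simpa [DZ, DU] using aux_rel k .uz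
  have ruy : DU k * DY k = DY k * DU k + (1 - DG k) := by
    simpa [DG, DU, DY] using aux_rel k .uy
  obtain ⟨l, a, w, hw0, hz, hg, hu, hv⟩ := aux_vec (F (DZ k)) (F (DG k)) (F (DU k)) (F (DV k))
    (by rw [← map_mul, rzg, map_mul]) (by rw [← map_mul, ruz, map_add, map_mul])
    (by rw [← map_mul, rvz, map_add, map_mul])
  -- the operator g - a
  let e : D k := DG k - algebraMap k (D k) a
  have hcen : ∀ d : D k, algebraMap k (D k) a * d = d * algebraMap k (D k) a :=
    fun d => Algebra.commutes a d
  have key : ∀ (d d' : D k), DG k * d = d * DG k + d' → DG k * d' = d' * DG k →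
      ∀ s : S, (∃ n : ℕ, (F e ^ n) s = 0) → ∃ n : ℕ, (F e ^ n) (d • s) = 0 := by
    rintro d d' h1 h2 s ⟨n, hn⟩
    refine ⟨n + 1, aux_comm_gen (F e) (F d) (F d') ?_ ?_ n s hn⟩
    · rw [← map_mul, ← map_mul, ← map_add]
      congr 1
      simp only [e, sub_mul, mul_sub, h1, hcen]; abel
    · change F e * F d' = F d' * F e
      rw [← map_mul, ← map_mul]
      congr 1
      simp only [e, sub_mul, mul_sub, h2, hcen]
  have key0 : ∀ d : D k, DG k * d = d * DG k →
      ∀ s : S, (∃ n : ℕ, (F e ^ n) s = 0) → ∃ n : ℕ, (F e ^ n) (d • s) = 0 :=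
    fun d h => key d 0 (by rw [h, add_zero]) (by simp)
  have hsum : ∀ s t : S, (∃ n : ℕ, (F e ^ n) s = 0) → (∃ n : ℕ, (F e ^ n) t = 0) →
      ∃ n : ℕ, (F e ^ n) (s + t) = 0 := by
    rintro s t ⟨n, hn⟩ ⟨m, hm⟩
    refine ⟨n + m, ?_⟩
    rw [map_add]
    have h1 : (F e ^ (n + m)) s = 0 := by
      rw [add_comm, pow_add, Module.End.mul_apply, hn, map_zero]
    have h2 : (F e ^ (n + m)) t = 0 := by
      rw [pow_add, Module.End.mul_apply, hm, map_zero]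
    rw [h1, h2, add_zero]
  have hall : ∀ d : D k, ∀ s : S, (∃ n : ℕ, (F e ^ n) s = 0) →
      ∃ n : ℕ, (F e ^ n) (d • s) = 0 := by
    apply aux_induct k
    · intro d d' h h' s hs
      rw [add_smul]
      exact hsum _ _ (h s hs) (h' s hs)
    · intro d d' h h' s hs
      rw [mul_smul]
      exact h _ (h' s hs)
    · intro r
      exact key0 _ (Algebra.commutes r _).symm
    · exact key0 _ rug.symm
    · refine key _ (-(DG k * DU k)) (by rw [rvg]; abel) ?_
      rw [mul_neg, neg_mul, mul_assoc, rug]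
    · exact key0 _ rzg.symm
    · exact key0 _ rfl
    · exact key0 _ (by rw [rgi, rig])
    · exact key0 _ rgx
    · exact key _ _ rgy (by rw [← mul_assoc, rgx])
  let N : Submodule (D k) S :=
    { carrier := {s | ∃ n : ℕ, (F e ^ n) s = 0}
      add_mem' := fun {s t} hs ht => hsum s t hs ht
      zero_mem' := ⟨0, by simp⟩
      smul_mem' := fun d s hs => hall d s hs }
  have hew : F e w = 0 := by
    simp only [e, map_sub, LinearMap.sub_apply, hg, AlgHom.commutes]
    simp
  have hN : N = ⊤ := by
    refine (eq_bot_or_eq_top N).resolve_left fun h => hw0 ?_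
    have : w ∈ N := ⟨1, by simpa using hew⟩
    rw [h] at this
    simpa using this
  have hnil : IsNilpotent (F e) := by
    rw [Module.End.isNilpotent_iff_of_finite]
    intro s
    have : s ∈ N := by rw [hN]; trivial
    exact this
  have htr := (LinearMap.isNilpotent_trace_of_isNilpotent hnil).eq_zero
  have ha1 : a = 1 := by
    have h1 : LinearMap.trace k S (F (DU k) * F (DY k)) =
        LinearMap.trace k S (F (DY k) * F (DU k)) := LinearMap.trace_mul_comm _ _ _
    rw [← map_mul, ruy, map_add, map_mul, map_add, map_sub, map_one, map_sub,
      LinearMap.trace_one] at h1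
    have h2 : LinearMap.trace k S (F (DG k)) = a * Module.finrank k S := by
      simp only [e, map_sub, AlgHom.commutes] at htr
      rw [Algebra.algebraMap_eq_smul_one, map_smul, LinearMap.trace_one, smul_eq_mul] at htr
      exact sub_eq_zero.1 htr
    rw [h2] at h1
    have h3 : (Module.finrank k S : k) * (1 - a) = 0 := by linear_combination h1
    have h4 : (Module.finrank k S : k) ≠ 0 := by
      exact_mod_cast (Module.finrank_pos (R := k) (M := S)).ne'
    exact (sub_eq_zero.1 ((mul_eq_zero.1 h3).resolve_left h4)).symm
  subst ha1
  have hle : MIdeal k 1 (-2 * l) ≤ LinearMap.ker (LinearMap.toSpanSingleton (D k) S w) := by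
    rw [MIdeal, Submodule.span_le]
    intro d hd
    simp only [Set.mem_insert_iff, Set.mem_singleton_iff] at hd
    simp only [SetLike.mem_coe, LinearMap.mem_ker, LinearMap.toSpanSingleton_apply]
    rcases hd with rfl | rfl | rfl | rfl
    · exact hew
    · rw [add_smul, ← hF, hz, algebraMap_smul, ← add_smul]
      have : l + -2 * l / 2 = 0 := by ring
      rw [this, zero_smul]
    · exact hu
    · exact hv
  refine ⟨-2 * l, Submodule.liftQ _ _ hle, ?_⟩
  intro s
  obtain ⟨d, hd⟩ := IsSimpleModule.toSpanSingleton_surjective (D k) hw0 s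
  exact ⟨Submodule.Quotient.mk d, by rw [Submodule.liftQ_apply]; exact hd⟩
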